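/- arXiv:1111.4493 — 3 statements merged into one kernel-verified Lean document; each statement's English description precedes it below -/
import Mathlib

section
/- Let k and m be positive integers with m ≤ k and m even. If A is an intersecting collection of k-multisets on {1,…,m}, then |A| ≤ |M_{(>m/2)}| + (1/2)·|M_{(m/2)}|, where M_{(>m/2)} is the collection of all k-multisets on {1,…,m} with more than m/2 distinct elements and M_{(m/2)} is the collection of all k-multisets on {1,…,m} with exactly m/2 distinct elements. -/
open Finset

theorem Nat.choose_le_choose_of_le_of_le_half {n a b : ℕ} (hab : a ≤ b) (hb : b ≤ n / 2) :
    n.choose a ≤ n.choose b := by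
  induction b, hab using Nat.le_induction with
  | base => exact le_rfl
  | succ b _ ih => exact (ih (by omega)).trans (Nat.choose_le_succ_of_lt_half_left (by omega))

theorem Nat.choose_le_choose_of_le_of_add_le {n a b : ℕ} (hab : a ≤ b) (hn : a + b ≤ n) :
    n.choose a ≤ n.choose b := by
  rcases le_or_gt b (n / 2) with hb | hb
  · exact Nat.choose_le_choose_of_le_of_le_half hab hb
  · rw [← Nat.choose_symm (show b ≤ n by omega)]
    exact Nat.choose_le_choose_of_le_of_le_half (by omega) (by omega)

/-- The multisets of size `k` with support exactly `S` correspond to the multisets of size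
`k - #S` on `S`, by removing one copy of each element. -/
theorem Sym.card_filter_toFinset_eq {α : Type*} [Fintype α] [DecidableEq α] {k : ℕ}
    (S : Finset α) (hS : #S ≤ k) :
    #{s : Sym α k | (s : Multiset α).toFinset = S} = (#S).multichoose (k - #S) := by
  have hcard : (#S).multichoose (k - #S) = #(univ : Finset (Sym S (k - #S))) := by
    rw [Finset.card_univ, Sym.card_sym_eq_multichoose, Fintype.card_coe]
  rw [hcard]
  symm
  refine Finset.card_bij
    (fun t _ => (⟨S.val + (t : Multiset S).map Subtype.val, by simp [hS]⟩ : Sym α k)) ?_ ?_ ?_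
  · intro t _
    refine mem_filter.2 ⟨mem_univ _, ?_⟩
    ext x
    simp only [Sym.coe_mk, Multiset.mem_toFinset, Multiset.mem_add, Multiset.mem_map,
      Finset.mem_val]
    exact ⟨fun h => h.elim id fun ⟨y, _, hy⟩ => hy ▸ y.2, Or.inl⟩
  · intro t _ t' _ h
    have h' := add_left_cancel (congrArg Subtype.val h)
    exact Sym.coe_injective (Multiset.map_injective Subtype.val_injective h')
  · intro s hs
    rw [mem_filter_univ] at hs
    have hle : S.val ≤ (s : Multiset α) := by
      rw [← hs, Multiset.toFinset_val]
      exact Multiset.dedup_le _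
    obtain ⟨u, hu⟩ := Multiset.le_iff_exists_add.1 hle
    have hmem : ∀ x ∈ u, x ∈ S := fun x hx => by
      rw [← hs, Multiset.mem_toFinset, hu]
      exact Multiset.mem_add.2 (Or.inr hx)
    have hsize : #S + u.card = k := by
      rw [← Finset.card_val, ← Multiset.card_add, ← hu]
      exact s.2
    lift u to Multiset S using hmem
    refine ⟨⟨u, ?_⟩, mem_univ _, Sym.coe_injective ?_⟩
    · rw [Multiset.card_map] at hsize
      omega
    · exact hu.symm

theorem Sym.card_filter_toFinset_eq_choose {α : Type*} [Fintype α] [DecidableEq α] {k : ℕ}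
    (S : Finset α) (hS : #S ≤ k) (hpos : 0 < #S) :
    #{s : Sym α k | (s : Multiset α).toFinset = S} = (k - 1).choose (#S - 1) := by
  rw [Sym.card_filter_toFinset_eq S hS, Nat.multichoose_eq,
    show #S + (k - #S) - 1 = k - 1 by omega]
  exact Nat.choose_symm_of_eq_add (by omega)

theorem Sym.card_filter_toFinset_eq_le {α : Type*} [Fintype α] [DecidableEq α] {k : ℕ}
    (hk : 0 < k) {S T : Finset α} (hST : #S ≤ #T) (hadd : #S + #T ≤ k) :
    #{s : Sym α k | (s : Multiset α).toFinset = S} ≤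
      #{s : Sym α k | (s : Multiset α).toFinset = T} := by
  rcases Nat.eq_zero_or_pos #S with h0 | hpos
  · rw [Sym.card_filter_toFinset_eq S (by omega), h0]
    obtain ⟨j, rfl⟩ := Nat.exists_eq_add_one.2 hk
    simp
  · rw [Sym.card_filter_toFinset_eq_choose S (by omega) hpos,
      Sym.card_filter_toFinset_eq_choose T (by omega) (by omega)]
    exact Nat.choose_le_choose_of_le_of_add_le (by omega) (by omega)

theorem Finset.sum_add_compl {α : Type*} [Fintype α] [DecidableEq α] (f : Finset α → ℕ) :
    ∑ S, (f S + f Sᶜ) = 2 * ∑ S, f S := by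
  rw [sum_add_distrib, two_mul]
  congr 1
  exact Fintype.sum_equiv (compl_involutive.toPerm _) _ _ fun _ => rfl

/-- For `m ≤ k` with `m` even, an intersecting collection `A` of `k`-multisets on `{1,…,m}`
satisfies `|A| ≤ |M_{(>m/2)}| + (1/2)·|M_{(m/2)}|` (stated multiplied through by 2),
where `M_{(>m/2)}` (resp. `M_{(m/2)}`) is the collection of `k`-multisets whose support
has more than (resp. exactly) `m/2` elements. -/
theorem stmt_5 (k m : ℕ) (hk : 0 < k) (hm : 0 < m) (hmk : m ≤ k) (heven : Even m)
    (A : Finset (Sym (Fin m) k))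
    (hint : ∀ s ∈ A, ∀ t ∈ A, ∃ x : Fin m, x ∈ s ∧ x ∈ t) :
    2 * A.card ≤
      2 * (Finset.univ.filter
        (fun s : Sym (Fin m) k => m < 2 * (s : Multiset (Fin m)).toFinset.card)).card +
      (Finset.univ.filter
        (fun s : Sym (Fin m) k => 2 * (s : Multiset (Fin m)).toFinset.card = m)).card := by
  let supp : Sym (Fin m) k → Finset (Fin m) := fun s => (s : Multiset (Fin m)).toFinset
  let N : Finset (Fin m) → ℕ := fun S => #{s | supp s = S}
  let a : Finset (Fin m) → ℕ := fun S => #{s ∈ A | supp s = S}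
  have haN : ∀ S, a S ≤ N S := fun S => card_le_card (filter_subset_filter _ (subset_univ A))
  have hA : #A = ∑ S, a S := card_eq_sum_card_fiberwise fun _ _ => mem_coe.2 (mem_univ _)
  have hfilter : ∀ (P : Finset (Fin m) → Prop) [DecidablePred P],
      #{s | P (supp s)} = ∑ S, if P S then N S else 0 := by
    intro P _
    rw [card_eq_sum_card_fiberwise (f := supp) (t := univ) fun _ _ => mem_coe.2 (mem_univ _)]
    refine sum_congr rfl fun S _ => ?_
    rw [filter_filter]
    split_ifs with hS
    · exact congrArg card (filter_congr fun s _ => ⟨And.right, fun h => ⟨h ▸ hS, h⟩⟩)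
    · exact card_eq_zero.2 (filter_eq_empty_iff.2 fun s _ h => hS (h.2 ▸ h.1))
  have hcompl : ∀ S, a S = 0 ∨ a Sᶜ = 0 := by
    intro S
    by_contra! h
    obtain ⟨s, hs⟩ := card_ne_zero.1 h.1
    obtain ⟨t, ht⟩ := card_ne_zero.1 h.2
    rw [mem_filter] at hs ht
    obtain ⟨x, hxs, hxt⟩ := hint s hs.1 t ht.1
    have hxS : x ∈ S := hs.2 ▸ Multiset.mem_toFinset.2 hxs
    have hxS' : x ∈ Sᶜ := ht.2 ▸ Multiset.mem_toFinset.2 hxt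
    exact mem_compl.1 hxS' hxS
  have hcard : ∀ S : Finset (Fin m), #S + #Sᶜ = m := fun S => by
    rw [card_add_card_compl, Fintype.card_fin]
  have hN : ∀ S : Finset (Fin m), #S ≤ #Sᶜ → N S ≤ N Sᶜ := fun S h =>
    Sym.card_filter_toFinset_eq_le hk h ((hcard S).trans_le hmk)
  have hN' : ∀ S : Finset (Fin m), #Sᶜ ≤ #S → N Sᶜ ≤ N S := fun S h =>
    Sym.card_filter_toFinset_eq_le hk h (by have := hcard S; omega)
  let g : Finset (Fin m) → ℕ := fun S =>
    2 * (if m < 2 * #S then N S else 0) + if 2 * #S = m then N S else 0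
  have hpair : ∀ S, 2 * (a S + a Sᶜ) ≤ g S + g Sᶜ := by
    intro S
    have h1 := haN S
    have h2 := haN Sᶜ
    have h3 := hcompl S
    have h4 := hcard S
    have h5 := hN S
    have h6 := hN' S
    simp only [g]
    split_ifs <;> omega
  have hsum := sum_le_sum fun S (_ : S ∈ univ) => hpair S
  rw [← mul_sum, sum_add_compl, sum_add_compl] at hsum
  have hg : ∑ S, g S = 2 * #{s | m < 2 * #(supp s)} + #{s | 2 * #(supp s) = m} := by
    rw [hfilter fun S => m < 2 * #S, hfilter fun S => 2 * #S = m, mul_sum, ← sum_add_distrib]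
  rw [hg, ← hA] at hsum
  exact Nat.le_of_mul_le_mul_left hsum two_pos
end

section
/- Let k and m be positive integers with m ≤ k and m even. An intersecting collection A of k-multisets on {1,…,m} satisfies |A| = |M_{(>m/2)}| + (1/2)·|M_{(m/2)}| if and only if A consists of all of M_{(>m/2)} together with a maximal intersecting subcollection of M_{(m/2)} (which has size (1/2)·|M_{(m/2)}|). -/
open Finset in
theorem Finset.card_sym_eq_multichoose {α : Type*} [DecidableEq α] (S : Finset α) (n : ℕ) :
    #(S.sym n) = Nat.multichoose #S n := by
  rw [← Fintype.card_coe S, ← Sym.card_sym_eq_multichoose, ← Finset.card_univ]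
  symm
  refine Finset.card_bij (fun t _ => Sym.map Subtype.val t) ?_ ?_ ?_
  · intro t _
    rw [Finset.mem_sym_iff]
    intro x hx
    obtain ⟨y, -, rfl⟩ := Sym.mem_map.mp hx
    exact y.2
  · intro t _ u _ h
    exact Sym.map_injective Subtype.val_injective n h
  · intro s hs
    rw [Finset.mem_sym_iff] at hs
    refine ⟨Sym.map (fun x => ⟨x.1, hs x.1 x.2⟩) s.attach, Finset.mem_univ _, ?_⟩
    rw [Sym.map_map]
    exact s.attach_map_coe

open Finset in
/-- The `k`-multisets with support exactly `S` correspond to the multisets of size `k - #S` on `S`: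
add one copy of every element of `S`. -/
theorem card_sym_filter_toFinset_eq {α : Type*} [Fintype α] [DecidableEq α] {k : ℕ} (hk : 0 < k)
    {S : Finset α} (hS : #S ≤ k) :
    #{s : Sym α k | (s : Multiset α).toFinset = S} = (k - 1).choose (k - #S) := by
  have hcard : #(S.sym (k - #S)) = (k - 1).choose (k - #S) := by
    rw [Finset.card_sym_eq_multichoose, Nat.multichoose_eq]
    congr 1
    omega
  have hadd (t : Sym α (k - #S)) : ((t : Multiset α) + S.val).card = k := by
    rw [Multiset.card_add, Sym.card_coe, Finset.card_val]
    omega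
  rw [← hcard]
  symm
  refine Finset.card_bij (fun t _ => Sym.mk ((t : Multiset α) + S.val) (hadd t)) ?_ ?_ ?_
  · intro t ht
    rw [Finset.mem_sym_iff] at ht
    rw [Finset.mem_filter]
    refine ⟨Finset.mem_univ _, ?_⟩
    ext x
    rw [Multiset.mem_toFinset, Sym.coe_mk, Multiset.mem_add, Finset.mem_val]
    exact ⟨fun h => h.elim (ht x) id, Or.inr⟩
  · intro t _ u _ h
    have h' := congrArg (fun s : Sym α k => (s : Multiset α)) h
    exact Sym.coe_injective (add_right_cancel h')
  · intro s hs
    rw [Finset.mem_filter] at hs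
    have hle : S.val ≤ (s : Multiset α) := by
      rw [← hs.2]
      exact Multiset.dedup_le _
    have hsub : ((s : Multiset α) - S.val).card = k - #S := by
      rw [Multiset.card_sub hle, Sym.card_coe, Finset.card_val]
    refine ⟨Sym.mk ((s : Multiset α) - S.val) hsub, ?_, ?_⟩
    · rw [Finset.mem_sym_iff]
      intro x hx
      rw [← hs.2, Multiset.mem_toFinset]
      exact Multiset.mem_of_le tsub_le_self hx
    · exact Sym.coe_injective (tsub_add_cancel_of_le hle)

theorem Nat.choose_lt_choose_of_le_two_mul {n x y : ℕ} (hn : n ≤ 2 * x) (hx : x ≤ n) (hxy : x < y) :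
    n.choose y < n.choose x := by
  induction y, hxy using Nat.le_induction with
  | base =>
    have hpos := Nat.choose_pos hx
    have h := Nat.choose_succ_right_eq n x
    have hlt : n - x < x + 1 := by omega
    by_contra! hle
    have h₁ : n.choose x * (n - x) < n.choose x * (x + 1) := Nat.mul_lt_mul_of_pos_left hlt hpos
    have h₂ : n.choose x * (x + 1) ≤ n.choose (x + 1) * (x + 1) := Nat.mul_le_mul_right _ hle
    omega
  | succ y hy ih =>
    refine lt_of_le_of_lt ?_ ih
    have h := Nat.choose_succ_right_eq n y
    refine Nat.le_of_mul_le_mul_right (c := y + 1) ?_ y.succ_pos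
    rw [h]
    exact Nat.mul_le_mul_left _ (by omega)

theorem Nat.choose_lt_choose_of_lt_add {n x y : ℕ} (hx : x ≤ n) (hxy : x < y) (hn : n < x + y) :
    n.choose y < n.choose x := by
  rcases le_total n (2 * x) with h | h
  · exact Nat.choose_lt_choose_of_le_two_mul h hx hxy
  · rw [← Nat.choose_symm hx]
    exact Nat.choose_lt_choose_of_le_two_mul (by omega) (by omega) (by omega)

open Finset in
/-- If `m ≤ k`, a larger support carries strictly more `k`-multisets than its complement. -/
theorem card_sym_filter_toFinset_eq_compl_lt {k m : ℕ} (hk : 0 < k) (hmk : m ≤ k)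
    {S : Finset (Fin m)} (hS : m < 2 * #S) :
    #{s : Sym (Fin m) k | (s : Multiset (Fin m)).toFinset = Sᶜ} <
      #{s : Sym (Fin m) k | (s : Multiset (Fin m)).toFinset = S} := by
  have hle : #S ≤ m := by simpa using S.card_le_univ
  have hc : #Sᶜ = m - #S := by simp [Finset.card_compl]
  rw [card_sym_filter_toFinset_eq hk (by omega), card_sym_filter_toFinset_eq hk (by omega), hc]
  exact Nat.choose_lt_choose_of_lt_add (by omega) (by omega) (by omega)

open Finset in
theorem Finset.sum_ite_card_sym_filter_toFinset_eq {α : Type*} [Fintype α] [DecidableEq α] (k : ℕ)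
    (p : Finset α → Prop) [DecidablePred p] :
    ∑ S : Finset α, (if p S then #{s : Sym α k | (s : Multiset α).toFinset = S} else 0) =
      #{s : Sym α k | p (s : Multiset α).toFinset} := by
  rw [Finset.card_eq_sum_card_fiberwise (f := fun s : Sym α k => (s : Multiset α).toFinset)
    (t := univ) (fun _ _ => by simp)]
  refine Finset.sum_congr rfl fun S _ => ?_
  split_ifs with h
  · congr 1
    ext s
    simp only [Finset.mem_filter, Finset.mem_univ, true_and]
    exact ⟨fun hs => ⟨hs ▸ h, hs⟩, fun hs => hs.2⟩
  · symm
    rw [Finset.card_eq_zero, Finset.filter_eq_empty_iff]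
    intro s hs hS
    simp only [Finset.mem_filter, Finset.mem_univ, true_and] at hs
    exact h (hS ▸ hs)

open Finset in
/-- An intersecting family cannot meet both the multisets supported on `S` and those supported on
the complement of `S`. -/
theorem card_filter_toFinset_eq_zero_or_compl {α : Type*} [Fintype α] [DecidableEq α] {k : ℕ}
    {A : Finset (Sym α k)} (hint : ∀ s ∈ A, ∀ t ∈ A, ∃ x : α, x ∈ s ∧ x ∈ t) (S : Finset α) :
    #(A.filter fun s : Sym α k => (s : Multiset α).toFinset = S) = 0 ∨
      #(A.filter fun s : Sym α k => (s : Multiset α).toFinset = Sᶜ) = 0 := by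
  by_contra! h
  obtain ⟨s, hs⟩ := Finset.card_ne_zero.mp h.1
  obtain ⟨t, ht⟩ := Finset.card_ne_zero.mp h.2
  rw [Finset.mem_filter] at hs ht
  obtain ⟨x, hxs, hxt⟩ := hint s hs.1 t ht.1
  have h₁ : x ∈ S := hs.2 ▸ Multiset.mem_toFinset.mpr hxs
  have h₂ : x ∈ Sᶜ := ht.2 ▸ Multiset.mem_toFinset.mpr hxt
  exact Finset.mem_compl.mp h₂ h₁

open Finset in
/-- An intersecting family attaining the bound contains every multiset whose support has more than
`m / 2` elements, and none whose support has fewer. -/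
theorem card_filter_toFinset_eq_of_extremal {k m : ℕ} (hk : 0 < k) (hmk : m ≤ k)
    {A : Finset (Sym (Fin m) k)}
    (hint : ∀ s ∈ A, ∀ t ∈ A, ∃ x : Fin m, x ∈ s ∧ x ∈ t)
    (hA : 2 * #A = 2 * #{s : Sym (Fin m) k | m < 2 * #(s : Multiset (Fin m)).toFinset} +
      #{s : Sym (Fin m) k | 2 * #(s : Multiset (Fin m)).toFinset = m})
    {S : Finset (Fin m)} (hS : m < 2 * #S) :
    #(A.filter fun s : Sym (Fin m) k => (s : Multiset (Fin m)).toFinset = S) =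
        #{s : Sym (Fin m) k | (s : Multiset (Fin m)).toFinset = S} ∧
      #(A.filter fun s : Sym (Fin m) k => (s : Multiset (Fin m)).toFinset = Sᶜ) = 0 := by
  set a : Finset (Fin m) → ℕ := fun S => #(A.filter fun s : Sym (Fin m) k => (s : Multiset (Fin m)).toFinset = S) with ha
  set w : Finset (Fin m) → ℕ :=
    fun S => #{s : Sym (Fin m) k | (s : Multiset (Fin m)).toFinset = S} with hw
  have haw : ∀ S, a S ≤ w S := fun S =>
    Finset.card_le_card (Finset.filter_subset_filter _ (Finset.subset_univ A))
  have hzero : ∀ S, a S = 0 ∨ a Sᶜ = 0 := card_filter_toFinset_eq_zero_or_compl hint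
  have hlt : ∀ S : Finset (Fin m), m < 2 * #S → w Sᶜ < w S := fun S hS =>
    card_sym_filter_toFinset_eq_compl_lt hk hmk hS
  have hc : ∀ S : Finset (Fin m), #Sᶜ = m - #S := fun S => by simp [Finset.card_compl]
  have hle : ∀ S : Finset (Fin m), #S ≤ m := fun S => by simpa using S.card_le_univ
  have hmid : ∀ S : Finset (Fin m), 2 * #S = m → w Sᶜ = w S := fun S hS => by
    have h₁ := hc S
    have h₂ : #Sᶜ = #S := by omega
    simp only [hw]
    rw [card_sym_filter_toFinset_eq hk ((hle _).trans hmk),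
      card_sym_filter_toFinset_eq hk ((hle _).trans hmk), h₂]
  have hcompl : ∀ f : Finset (Fin m) → ℕ, ∑ S, f Sᶜ = ∑ S, f S := fun f =>
    (Equiv.sum_comp (Equiv.ofBijective _ (compl_bijective (α := Finset (Fin m)))) f)
  let g : Finset (Fin m) → ℕ := fun S => if m < 2 * #S then w S else 0
  have hsumA : ∑ S, (a S + a Sᶜ) = 2 * #A := by
    rw [Finset.sum_add_distrib, hcompl a, ← two_mul,
      Finset.card_eq_sum_card_fiberwise (s := A)
        (f := fun s : Sym (Fin m) k => (s : Multiset (Fin m)).toFinset) (t := univ)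
        (fun _ _ => by simp)]
  have hsumw : ∑ S, (g S + g Sᶜ + if 2 * #S = m then w S else 0) = 2 * #A := by
    rw [hA, Finset.sum_add_distrib, Finset.sum_add_distrib, hcompl g, ← two_mul,
      Finset.sum_ite_card_sym_filter_toFinset_eq k (fun S : Finset (Fin m) => 2 * #S = m),
      Finset.sum_ite_card_sym_filter_toFinset_eq k (fun S : Finset (Fin m) => m < 2 * #S)]
  have hterm : ∀ S ∈ (univ : Finset (Finset (Fin m))),
      a S + a Sᶜ ≤ g S + g Sᶜ + if 2 * #S = m then w S else 0 := by
    intro S _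
    have h₁ := haw S
    have h₂ := haw Sᶜ
    have h₃ := hzero S
    have h₄ := hlt S
    have h₅ := hlt Sᶜ
    have h₆ := hmid S
    have h₇ := hc S
    have h₈ := hle S
    rw [compl_compl] at h₅
    simp only [g]
    split_ifs <;> omega
  have heq := (Finset.sum_eq_sum_iff_of_le hterm).mp (hsumA.trans hsumw.symm) S (mem_univ S)
  have h₁ := haw S
  have h₂ := haw Sᶜ
  have h₃ := hzero S
  have h₄ := hlt S hS
  have h₇ := hc S
  have h₈ := hle S
  simp only [g] at heq
  change a S = w S ∧ a Sᶜ = 0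
  split_ifs at heq <;> omega

/-- For `m ≤ k` with `m` even, an intersecting collection `A` of `k`-multisets on `{1,…,m}`
satisfies `|A| = |M_{(>m/2)}| + (1/2)·|M_{(m/2)}|` (stated multiplied through by 2)
iff `A` is `M_{(>m/2)}` together with a maximal intersecting subcollection of `M_{(m/2)}`
(one of size `(1/2)·|M_{(m/2)}|`). -/
theorem stmt_6 (k m : ℕ) (hk : 0 < k) (hm : 0 < m) (hmk : m ≤ k) (heven : Even m)
    (A : Finset (Sym (Fin m) k))
    (hint : ∀ s ∈ A, ∀ t ∈ A, ∃ x : Fin m, x ∈ s ∧ x ∈ t) :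
    (2 * A.card =
      2 * (Finset.univ.filter
        (fun s : Sym (Fin m) k => m < 2 * (s : Multiset (Fin m)).toFinset.card)).card +
      (Finset.univ.filter
        (fun s : Sym (Fin m) k => 2 * (s : Multiset (Fin m)).toFinset.card = m)).card) ↔
    (∃ B : Finset (Sym (Fin m) k),
      B ⊆ Finset.univ.filter
        (fun s : Sym (Fin m) k => 2 * (s : Multiset (Fin m)).toFinset.card = m) ∧
      (∀ s ∈ B, ∀ t ∈ B, ∃ x : Fin m, x ∈ s ∧ x ∈ t) ∧
      2 * B.card = (Finset.univ.filter
        (fun s : Sym (Fin m) k => 2 * (s : Multiset (Fin m)).toFinset.card = m)).card ∧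
      A = (Finset.univ.filter
        (fun s : Sym (Fin m) k => m < 2 * (s : Multiset (Fin m)).toFinset.card)) ∪ B) := by
  constructor
  · intro hA
    have key := fun S hS =>
      card_filter_toFinset_eq_of_extremal hk hmk hint hA (S := S) hS
    have hsub : Finset.univ.filter
        (fun s : Sym (Fin m) k => m < 2 * (s : Multiset (Fin m)).toFinset.card) ⊆ A := by
      intro s hs
      rw [Finset.mem_filter] at hs
      have heq := Finset.eq_of_subset_of_card_le
        (Finset.filter_subset_filter _ (Finset.subset_univ A)) (key _ hs.2).1.ge
      have hmem : s ∈ Finset.univ.filter (fun t : Sym (Fin m) k =>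
          (t : Multiset (Fin m)).toFinset = (s : Multiset (Fin m)).toFinset) := by simp
      rw [← heq] at hmem
      exact (Finset.mem_filter.mp hmem).1
    have hlarge : ∀ s ∈ A, m ≤ 2 * (s : Multiset (Fin m)).toFinset.card := by
      intro s hs
      by_contra! hlt
      have hc := Finset.card_compl (s : Multiset (Fin m)).toFinset
      rw [Fintype.card_fin] at hc
      have hzero := (key (s : Multiset (Fin m)).toFinsetᶜ (by omega)).2
      rw [compl_compl, Finset.card_eq_zero, Finset.filter_eq_empty_iff] at hzero
      exact hzero hs rfl
    have hunion : A = Finset.univ.filter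
          (fun s : Sym (Fin m) k => m < 2 * (s : Multiset (Fin m)).toFinset.card) ∪
        A.filter (fun s => 2 * (s : Multiset (Fin m)).toFinset.card = m) := by
      ext s
      simp only [Finset.mem_union, Finset.mem_filter, Finset.mem_univ, true_and]
      constructor
      · intro hs
        rcases (hlarge s hs).lt_or_eq with h | h
        · exact Or.inl h
        · exact Or.inr ⟨hs, h.symm⟩
      · rintro (h | h)
        · exact hsub (by simpa using h)
        · exact h.1
    refine ⟨A.filter (fun s => 2 * (s : Multiset (Fin m)).toFinset.card = m),
      Finset.filter_subset_filter _ (Finset.subset_univ A), ?_, ?_, hunion⟩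
    · intro s hs t ht
      exact hint s (Finset.mem_filter.mp hs).1 t (Finset.mem_filter.mp ht).1
    · have hcard := congrArg Finset.card hunion
      rw [Finset.card_union_of_disjoint] at hcard
      · omega
      · rw [Finset.disjoint_left]
        intro s hs ht
        rw [Finset.mem_filter] at hs ht
        omega
  · rintro ⟨B, hB, -, hcard, rfl⟩
    rw [Finset.card_union_of_disjoint, mul_add, hcard]
    rw [Finset.disjoint_left]
    intro s hs ht
    have ht := hB ht
    rw [Finset.mem_filter] at hs ht
    omega
end

section
/- Let k and m be positive integers and let n = m + k − 1. For every intersecting collection A of k-multisets on {1,…,m}, there exists an intersecting family of k-element subsets of {1,…,n} of the same cardinality as A. In particular, the maximum size of an intersecting collection of k-multisets on {1,…,m} is at most the maximum size of an intersecting family of k-subsets of {1,…,n}. -/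
/-- At most `r.choose (r + 1 - #S)` multisets of cardinality `r + 1` have support exactly `S`. -/
theorem Sym.card_filter_toFinset_eq_le_s13 {α : Type*} [Fintype α] [DecidableEq α] (r : ℕ)
    (S : Finset α) :
    (Finset.univ.filter fun s : Sym α (r + 1) => (s : Multiset α).toFinset = S).card ≤
      r.choose (r + 1 - S.card) := by
  rcases Finset.eq_empty_or_nonempty
    (Finset.univ.filter fun s : Sym α (r + 1) => (s : Multiset α).toFinset = S) with h | ⟨s₀, h₀⟩
  · simp [h]
  have hs₀ : (s₀ : Multiset α).toFinset = S := by simpa using h₀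
  have hle : S.card ≤ r + 1 := by
    have := Multiset.toFinset_card_le (s₀ : Multiset α)
    rwa [hs₀, Sym.card_coe] at this
  have hpos : 0 < S.card := by
    obtain ⟨a, ha⟩ := s₀.exists_mem
    exact Finset.card_pos.2 ⟨a, hs₀ ▸ Multiset.mem_toFinset.2 ha⟩
  have hcard : Fintype.card (Sym S (r + 1 - S.card)) = r.choose (r + 1 - S.card) := by
    rw [Sym.card_sym_eq_choose, Fintype.card_coe]
    congr 1
    omega
  rw [← hcard, ← Finset.card_univ]
  -- Adding `S` to a multiset on `S` is surjective onto the multisets with support `S`.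
  refine Finset.card_le_card_of_surjOn
    (fun t => Sym.mk (S.val + (t : Multiset S).map (↑)) (by
      rw [Multiset.card_add, Multiset.card_map, Sym.card_coe, Finset.card_val]; omega)) ?_
  intro s hs
  have hs : (s : Multiset α).toFinset = S := by simpa using hs
  have hSs : S.val ≤ s := by
    rw [← hs, Multiset.toFinset_val]
    exact Multiset.dedup_le _
  obtain ⟨t, ht⟩ : ∃ t : Multiset S, t.map (↑) = (s : Multiset α) - S.val := by
    refine CanLift.prf (cond := fun m : Multiset α => ∀ a ∈ m, a ∈ S) _ fun a ha => ?_
    rw [← hs]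
    exact Multiset.mem_toFinset.2 (Multiset.mem_of_le tsub_le_self ha)
  have htc : t.card = r + 1 - S.card := by
    rw [← Multiset.card_map ((↑) : S → α), ht, Multiset.card_sub hSs, Sym.card_coe,
      Finset.card_val]
  refine ⟨Sym.mk t htc, by simp, Sym.ext ?_⟩
  change S.val + t.map (↑) = (s : Multiset α)
  rw [ht, add_tsub_cancel_of_le hSs]

/-- Multisets of cardinality `r + 1` embed into finsets of cardinality `r + 1` on `r` additional
points, in such a way that supports are preserved. -/
theorem Sym.exists_injective_disjSum (α : Type*) [Fintype α] [DecidableEq α] (r : ℕ) :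
    ∃ g : Sym α (r + 1) → Finset (Fin r),
      (∀ s : Sym α (r + 1), ((s : Multiset α).toFinset.disjSum (g s)).card = r + 1) ∧
      Function.Injective fun s : Sym α (r + 1) => (s : Multiset α).toFinset.disjSum (g s) := by
  have key : ∀ S : Finset α, ∃ f : {s : Sym α (r + 1) // (s : Multiset α).toFinset = S} →
      Finset (Fin r), (∀ s, (f s).card = r + 1 - S.card) ∧ Function.Injective f := by
    intro S
    obtain ⟨e⟩ : Nonempty ({s : Sym α (r + 1) // (s : Multiset α).toFinset = S} ↪
        Finset.powersetCard (r + 1 - S.card) (Finset.univ : Finset (Fin r))) := by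
      refine Function.Embedding.nonempty_of_card_le ?_
      rw [Fintype.card_subtype, Fintype.card_coe, Finset.card_powersetCard, Finset.card_univ,
        Fintype.card_fin]
      exact Sym.card_filter_toFinset_eq_le_s13 r S
    exact ⟨fun s => e s, fun s => (Finset.mem_powersetCard.1 (e s).2).2,
      Subtype.val_injective.comp e.injective⟩
  choose f hf hinj using key
  refine ⟨fun s => f _ ⟨s, rfl⟩, fun s => ?_, fun s t hst => ?_⟩
  · have := Multiset.toFinset_card_le (s : Multiset α)
    rw [Sym.card_coe] at this
    rw [Finset.card_disjSum, hf]
    omega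
  · have hl : (s : Multiset α).toFinset = (t : Multiset α).toFinset := by
      simpa using congrArg Finset.toLeft hst
    have hr : f _ ⟨s, rfl⟩ = f _ ⟨t, rfl⟩ := by
      simpa using congrArg Finset.toRight hst
    have hcast : ∀ (S : Finset α) (h : (s : Multiset α).toFinset = S),
        f _ ⟨s, rfl⟩ = f S ⟨s, h⟩ := by
      rintro _ rfl
      rfl
    rw [hcast _ hl] at hr
    exact congrArg Subtype.val (hinj _ hr)

/-- An intersecting collection of `(r + 1)`-multisets on `m` points gives an equinumerous
intersecting family of `(r + 1)`-subsets of `m + r` points. -/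
theorem exists_intersecting_finsets_of_multisets (m r : ℕ) (A : Finset (Sym (Fin m) (r + 1)))
    (hA : ∀ s ∈ A, ∀ t ∈ A, ∃ x : Fin m, x ∈ s ∧ x ∈ t) :
    ∃ F : Finset (Finset (Fin (m + r))),
      (∀ s ∈ F, s.card = r + 1) ∧
      (∀ s ∈ F, ∀ t ∈ F, (s ∩ t).Nonempty) ∧
      F.card = A.card := by
  obtain ⟨g, hcard, hinj⟩ := Sym.exists_injective_disjSum (Fin m) r
  refine ⟨A.image fun s : Sym (Fin m) (r + 1) =>
    ((s : Multiset (Fin m)).toFinset.disjSum (g s)).map finSumFinEquiv.toEmbedding, ?_, ?_, ?_⟩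
  · simp only [Finset.forall_mem_image]
    intro s _
    rw [Finset.card_map, hcard]
  · simp only [Finset.forall_mem_image]
    intro s hs t ht
    obtain ⟨x, hxs, hxt⟩ := hA s hs t ht
    rw [← Finset.map_inter]
    refine Finset.Nonempty.map ⟨Sum.inl x, ?_⟩
    simp [hxs, hxt]
  · exact Finset.card_image_of_injective _ ((Finset.map_injective _).comp hinj)

/-- Let `n = m + k - 1`. Every intersecting collection of `k`-multisets on `{1,…,m}`
gives rise to an intersecting family of `k`-subsets of `{1,…,n}` of the same
cardinality; in particular the maximum size of an intersecting collection of
`k`-multisets on `{1,…,m}` is at most the maximum size of an intersecting family of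
`k`-subsets of `{1,…,n}`. -/
theorem stmt_13 (k m n : ℕ) (hk : 0 < k) (hm : 0 < m) (hn : n = m + k - 1) :
    (∀ A : Finset (Sym (Fin m) k),
      (∀ s ∈ A, ∀ t ∈ A, ∃ x : Fin m, x ∈ s ∧ x ∈ t) →
      ∃ F : Finset (Finset (Fin n)),
        (∀ s ∈ F, s.card = k) ∧
        (∀ s ∈ F, ∀ t ∈ F, (s ∩ t).Nonempty) ∧
        F.card = A.card) ∧
    (∀ A : Finset (Sym (Fin m) k),
      (∀ s ∈ A, ∀ t ∈ A, ∃ x : Fin m, x ∈ s ∧ x ∈ t) →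
      ∀ N : ℕ,
        (∀ F : Finset (Finset (Fin n)),
          (∀ s ∈ F, s.card = k) → (∀ s ∈ F, ∀ t ∈ F, (s ∩ t).Nonempty) → F.card ≤ N) →
        A.card ≤ N) := by
  obtain ⟨r, rfl⟩ := Nat.exists_eq_add_of_lt hk
  obtain rfl : n = m + r := by omega
  rw [zero_add]
  refine ⟨exists_intersecting_finsets_of_multisets m r, fun A hA N hN => ?_⟩
  obtain ⟨F, hF, hFF, hFA⟩ := exists_intersecting_finsets_of_multisets m r A hA
  exact hFA ▸ hN F hF hFF
end
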